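/- arXiv:1710.03318 — 6 statements merged into one kernel-verified Lean document; each statement's English description precedes it below -/
import Mathlib

section
/- For the Pinchuk map 𝒫 = (P, Q) : ℝ² → ℝ², the Jacobian determinant satisfies the polynomial identity det J𝒫(x, y) = t² + (t + f·(13 + 15h))² + f² for all (x, y) ∈ ℝ², where t, h, f are evaluated at (x, y). -/
open Filter Topology

noncomputable section

/-- `t = x·y − 1` -/
def tP (x y : ℝ) : ℝ := x * y - 1

/-- `h = t·(x·t + 1)` -/
def hP (x y : ℝ) : ℝ := tP x y * (x * tP x y + 1)

/-- `f = (x·t + 1)²·(t² + y)` -/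
def fP (x y : ℝ) : ℝ := (x * tP x y + 1) ^ 2 * ((tP x y) ^ 2 + y)

/-- First component `P = f + h` of the Pinchuk map. -/
def PP (x y : ℝ) : ℝ := fP x y + hP x y

/-- Second component `Q` of the Pinchuk map. -/
def QP (x y : ℝ) : ℝ :=
  -(tP x y) ^ 2 - 6 * tP x y * hP x y * (hP x y + 1) - 170 * fP x y * hP x y
    - 91 * (hP x y) ^ 2 - 195 * fP x y * (hP x y) ^ 2 - 69 * (hP x y) ^ 3
    - 75 * fP x y * (hP x y) ^ 3 - (75 / 4) * (hP x y) ^ 4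

/-- The Pinchuk map `𝒫 = (P, Q) : ℝ² → ℝ²`. -/
def Pinchuk (z : ℝ × ℝ) : ℝ × ℝ := (PP z.1 z.2, QP z.1 z.2)

/-- Determinant of the Jacobian matrix `J𝒫(x,y)` of the Pinchuk map at `(x, y)`. -/
def jacDetPinchuk (x y : ℝ) : ℝ :=
  deriv (fun u => PP u y) x * deriv (fun v => QP x v) y
    - deriv (fun v => PP x v) y * deriv (fun u => QP u y) x

/-!
The Jacobian determinant of two functions on the plane is a Poisson bracket `{u, v}`: it is
antisymmetric and a derivation in each argument. On the building blocks of the Pinchuk map it takes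
the values `{t, h} = t - h`, `{h, f} = f` and `{t, f} = f - 2h - 3h²`, so `{P, Q}` is a polynomial
in `t, h, f`. It differs from the claimed sum of squares by `18 (h + 1) (f (h - t) - h² (h + 1))`,
which vanishes because `t, h, f` satisfy the algebraic relation `f (h - t) = h² (h + 1)`.
-/

section PoissonBracket

variable {𝕜 : Type*} [NontriviallyNormedField 𝕜]

/-- The canonical Poisson bracket `{u, v} = u_x v_y - u_y v_x` at `(x, y)`, i.e. the Jacobian
determinant of `(u, v)`. It is written with one-variable derivatives of curried functions, so only
the partial derivatives matter, and a missing one counts as `0`. -/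
def poissonBracket (u v : 𝕜 → 𝕜 → 𝕜) (x y : 𝕜) : 𝕜 :=
  deriv (fun s => u s y) x * deriv (fun s => v x s) y
    - deriv (fun s => u x s) y * deriv (fun s => v s y) x

variable (u : 𝕜 → 𝕜 → 𝕜) {v w : 𝕜 → 𝕜 → 𝕜} {x y : 𝕜}

theorem poissonBracket_self (x y : 𝕜) : poissonBracket u u x y = 0 := by
  unfold poissonBracket
  ring

theorem poissonBracket_swap (v : 𝕜 → 𝕜 → 𝕜) (x y : 𝕜) :
    poissonBracket u v x y = -poissonBracket v u x y := by
  unfold poissonBracket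
  ring

theorem poissonBracket_fst_snd (x y : 𝕜) :
    poissonBracket (fun a _ : 𝕜 => a) (fun _ b => b) x y = 1 := by
  simp [poissonBracket]

theorem poissonBracket_const_right (c x y : 𝕜) : poissonBracket u (fun _ _ => c) x y = 0 := by
  simp [poissonBracket]

theorem poissonBracket_neg_right (v : 𝕜 → 𝕜 → 𝕜) (x y : 𝕜) :
    poissonBracket u (fun a b => -v a b) x y = -poissonBracket u v x y := by
  simp only [poissonBracket, deriv.fun_neg]
  ring

theorem poissonBracket_add_right
    (hvx : DifferentiableAt 𝕜 (fun s => v s y) x) (hvy : DifferentiableAt 𝕜 (fun s => v x s) y)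
    (hwx : DifferentiableAt 𝕜 (fun s => w s y) x) (hwy : DifferentiableAt 𝕜 (fun s => w x s) y) :
    poissonBracket u (fun a b => v a b + w a b) x y =
      poissonBracket u v x y + poissonBracket u w x y := by
  simp only [poissonBracket, deriv_fun_add hvx hwx, deriv_fun_add hvy hwy]
  ring

theorem poissonBracket_add_left
    (hvx : DifferentiableAt 𝕜 (fun s => v s y) x) (hvy : DifferentiableAt 𝕜 (fun s => v x s) y)
    (hwx : DifferentiableAt 𝕜 (fun s => w s y) x) (hwy : DifferentiableAt 𝕜 (fun s => w x s) y) :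
    poissonBracket (fun a b => v a b + w a b) u x y =
      poissonBracket v u x y + poissonBracket w u x y := by
  rw [poissonBracket_swap, poissonBracket_add_right u hvx hvy hwx hwy, neg_add,
    ← poissonBracket_swap, ← poissonBracket_swap]

theorem poissonBracket_sub_right
    (hvx : DifferentiableAt 𝕜 (fun s => v s y) x) (hvy : DifferentiableAt 𝕜 (fun s => v x s) y)
    (hwx : DifferentiableAt 𝕜 (fun s => w s y) x) (hwy : DifferentiableAt 𝕜 (fun s => w x s) y) :
    poissonBracket u (fun a b => v a b - w a b) x y =
      poissonBracket u v x y - poissonBracket u w x y := by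
  simp only [poissonBracket, deriv_fun_sub hvx hwx, deriv_fun_sub hvy hwy]
  ring

theorem poissonBracket_mul_right
    (hvx : DifferentiableAt 𝕜 (fun s => v s y) x) (hvy : DifferentiableAt 𝕜 (fun s => v x s) y)
    (hwx : DifferentiableAt 𝕜 (fun s => w s y) x) (hwy : DifferentiableAt 𝕜 (fun s => w x s) y) :
    poissonBracket u (fun a b => v a b * w a b) x y =
      poissonBracket u v x y * w x y + v x y * poissonBracket u w x y := by
  simp only [poissonBracket, deriv_fun_mul hvx hwx, deriv_fun_mul hvy hwy]
  ring

theorem poissonBracket_pow_right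
    (hvx : DifferentiableAt 𝕜 (fun s => v s y) x) (hvy : DifferentiableAt 𝕜 (fun s => v x s) y)
    (n : ℕ) :
    poissonBracket u (fun a b => v a b ^ n) x y =
      n * v x y ^ (n - 1) * poissonBracket u v x y := by
  simp only [poissonBracket, deriv_fun_pow hvx, deriv_fun_pow hvy]
  ring

end PoissonBracket

section Pinchuk

variable (u : ℝ → ℝ → ℝ) (x y : ℝ)

@[fun_prop]
theorem differentiable_tP : Differentiable ℝ (fun z : ℝ × ℝ => tP z.1 z.2) := by
  unfold tP
  fun_prop

@[fun_prop]
theorem differentiable_hP : Differentiable ℝ (fun z : ℝ × ℝ => hP z.1 z.2) := by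
  unfold hP
  fun_prop

@[fun_prop]
theorem differentiable_fP : Differentiable ℝ (fun z : ℝ × ℝ => fP z.1 z.2) := by
  unfold fP
  fun_prop

theorem fP_mul_hP_sub_tP : fP x y * (hP x y - tP x y) = hP x y ^ 2 * (hP x y + 1) := by
  simp only [fP, hP, tP]
  ring

theorem poissonBracket_tP_right :
    poissonBracket u tP x y =
      y * poissonBracket u (fun a _ => a) x y + x * poissonBracket u (fun _ b => b) x y := by
  unfold tP
  rw [poissonBracket_sub_right, poissonBracket_mul_right, poissonBracket_const_right]
  · ring
  all_goals fun_prop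

theorem poissonBracket_hP_right :
    poissonBracket u hP x y =
      (2 * x * tP x y + 1) * poissonBracket u tP x y
        + tP x y ^ 2 * poissonBracket u (fun a _ => a) x y := by
  unfold hP
  simp (disch := fun_prop) only [poissonBracket_add_right, poissonBracket_mul_right,
    poissonBracket_const_right]
  ring

theorem poissonBracket_fP_right :
    poissonBracket u fP x y =
      2 * (x * tP x y + 1) * (tP x y ^ 2 + y)
          * (tP x y * poissonBracket u (fun a _ => a) x y + x * poissonBracket u tP x y)
        + (x * tP x y + 1) ^ 2
          * (2 * tP x y * poissonBracket u tP x y + poissonBracket u (fun _ b => b) x y) := by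
  unfold fP
  simp (disch := fun_prop) only [poissonBracket_add_right, poissonBracket_mul_right,
    poissonBracket_pow_right, poissonBracket_const_right]
  ring

theorem poissonBracket_PP_left :
    poissonBracket PP u x y = poissonBracket fP u x y + poissonBracket hP u x y :=
  poissonBracket_add_left u (by fun_prop) (by fun_prop) (by fun_prop) (by fun_prop)

theorem poissonBracket_QP_right :
    poissonBracket u QP x y =
      -(2 * tP x y + 6 * hP x y * (hP x y + 1)) * poissonBracket u tP x y
        - (6 * tP x y * (2 * hP x y + 1) + 182 * hP x y + 207 * hP x y ^ 2 + 75 * hP x y ^ 3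
            + fP x y * (170 + 390 * hP x y + 225 * hP x y ^ 2)) * poissonBracket u hP x y
        - (170 * hP x y + 195 * hP x y ^ 2 + 75 * hP x y ^ 3) * poissonBracket u fP x y := by
  unfold QP
  simp (disch := fun_prop) only [poissonBracket_neg_right, poissonBracket_add_right,
    poissonBracket_sub_right, poissonBracket_mul_right, poissonBracket_pow_right,
    poissonBracket_const_right]
  ring

theorem poissonBracket_fst_tP : poissonBracket (fun a _ => a) tP x y = x := by
  rw [poissonBracket_tP_right, poissonBracket_self, poissonBracket_fst_snd]
  ring

theorem poissonBracket_snd_tP : poissonBracket (fun _ b => b) tP x y = -y := by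
  rw [poissonBracket_tP_right, poissonBracket_self, poissonBracket_swap, poissonBracket_fst_snd]
  ring

theorem poissonBracket_tP_hP : poissonBracket tP hP x y = tP x y - hP x y := by
  rw [poissonBracket_hP_right, poissonBracket_self, poissonBracket_swap, poissonBracket_fst_tP, hP]
  ring

theorem poissonBracket_tP_fP :
    poissonBracket tP fP x y = fP x y - 2 * hP x y - 3 * hP x y ^ 2 := by
  rw [poissonBracket_fP_right, poissonBracket_self, poissonBracket_swap _ (fun a _ => a),
    poissonBracket_fst_tP, poissonBracket_swap _ (fun _ b => b), poissonBracket_snd_tP]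
  simp only [fP, hP, tP]
  ring

theorem poissonBracket_fst_fP :
    poissonBracket (fun a _ => a) fP x y =
      2 * x ^ 2 * (x * tP x y + 1) * (tP x y ^ 2 + y)
        + (x * tP x y + 1) ^ 2 * (2 * x * tP x y + 1) := by
  rw [poissonBracket_fP_right, poissonBracket_self, poissonBracket_fst_tP, poissonBracket_fst_snd]
  ring

theorem poissonBracket_hP_fP : poissonBracket hP fP x y = fP x y := by
  rw [poissonBracket_swap, poissonBracket_hP_right, poissonBracket_swap fP tP,
    poissonBracket_tP_fP, poissonBracket_swap fP, poissonBracket_fst_fP]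
  simp only [fP, hP, tP]
  ring

end Pinchuk

/-- `det J𝒫(x, y) = t² + (t + f·(13 + 15h))² + f²` for all `(x, y) ∈ ℝ²`. -/
theorem pinchuk_jacobian_identity (x y : ℝ) :
    jacDetPinchuk x y =
      (tP x y) ^ 2 + (tP x y + fP x y * (13 + 15 * hP x y)) ^ 2 + (fP x y) ^ 2 := by
  have jacDet_eq : jacDetPinchuk x y = poissonBracket fP QP x y + poissonBracket hP QP x y :=
    poissonBracket_PP_left QP x y
  rw [jacDet_eq, poissonBracket_QP_right, poissonBracket_QP_right, poissonBracket_self,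
    poissonBracket_self, poissonBracket_swap fP tP, poissonBracket_swap fP hP,
    poissonBracket_swap hP tP, poissonBracket_tP_hP, poissonBracket_tP_fP, poissonBracket_hP_fP]
  linear_combination 18 * (hP x y + 1) * fP_mul_hP_sub_tP x y
end
end

section
/- The Pinchuk map 𝒫 = (P, Q) : ℝ² → ℝ² is not injective: there exist distinct points (x₁, y₁) ≠ (x₂, y₂) in ℝ² with 𝒫(x₁, y₁) = 𝒫(x₂, y₂). -/
open Filter Topology

noncomputable section

/-! Where `x * t = -1` both `f` and `h` vanish, so the Pinchuk map takes the value `(0, -t ^ 2)`.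
This curve is parametrised by `t ≠ 0`, so its points with parameters `t` and `-t` collide. -/

lemma pinchuk_eq_of_mul_tP_eq_neg_one {x y : ℝ} (hxt : x * tP x y = -1) :
    Pinchuk (x, y) = (0, -(tP x y) ^ 2) := by
  have hh : hP x y = 0 := by simp [hP, hxt]
  have hf : fP x y = 0 := by simp [fP, hxt]
  simp [Pinchuk, PP, QP, hh, hf]

/-- The curve `x * t = -1`, parametrised by the value `s` of `t`: solving `x * s = -1` and
`x * y - 1 = s` for `x` and `y`. Only nonzero parameters give points of the curve, since
`0⁻¹ = 0`. -/
def collisionCurve (s : ℝ) : ℝ × ℝ := (-s⁻¹, -(s * (s + 1)))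

lemma collisionCurve_injective : Function.Injective collisionCurve := fun _ _ h =>
  inv_injective (neg_injective (congrArg Prod.fst h))

lemma tP_collisionCurve {s : ℝ} (hs : s ≠ 0) :
    tP (collisionCurve s).1 (collisionCurve s).2 = s := by
  simp [tP, collisionCurve, hs]

lemma pinchuk_collisionCurve {s : ℝ} (hs : s ≠ 0) :
    Pinchuk (collisionCurve s) = (0, -s ^ 2) := by
  have ht := tP_collisionCurve hs
  have hxt : (collisionCurve s).1 * tP (collisionCurve s).1 (collisionCurve s).2 = -1 := by
    rw [ht, collisionCurve, neg_mul, inv_mul_cancel₀ hs]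
  rw [← Prod.mk.eta (p := collisionCurve s), pinchuk_eq_of_mul_tP_eq_neg_one hxt, ht]

/-- the Pinchuk map is not injective. -/
theorem pinchuk_not_injective :
    ∃ z₁ z₂ : ℝ × ℝ, z₁ ≠ z₂ ∧ Pinchuk z₁ = Pinchuk z₂ := by
  refine ⟨collisionCurve 1, collisionCurve (-1), collisionCurve_injective.ne (by norm_num), ?_⟩
  rw [pinchuk_collisionCurve one_ne_zero, pinchuk_collisionCurve (neg_ne_zero.mpr one_ne_zero),
    neg_sq]
end
end

section
/- The Pinchuk map 𝒫 : ℝ² → ℝ² is not proper; equivalently, its asymptotic variety S_𝒫 is non-empty: there exists a sequence (ξ_k) in ℝ² with ‖ξ_k‖ → ∞ such that 𝒫(ξ_k) converges to a point of ℝ². -/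
open Filter Topology

noncomputable section

theorem pinchuk_of_mul_eq_one {x y : ℝ} (hxy : x * y = 1) : Pinchuk (x, y) = (y, 0) := by
  have ht : tP x y = 0 := sub_eq_zero.mpr hxy
  have hh : hP x y = 0 := by rw [hP, ht, zero_mul]
  have hf : fP x y = y := by rw [fP, ht]; ring
  simp [Pinchuk, PP, QP, ht, hh, hf]

theorem tendsto_pinchuk_inv_cobounded :
    Tendsto (fun x : ℝ => Pinchuk (x, x⁻¹)) (Bornology.cobounded ℝ) (𝓝 (0, 0)) := by
  have hinv : Tendsto (fun x : ℝ => (x⁻¹, (0 : ℝ))) (Bornology.cobounded ℝ) (𝓝 (0, 0)) :=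
    tendsto_inv₀_cobounded.prodMk_nhds tendsto_const_nhds
  refine hinv.congr' ?_
  filter_upwards [Bornology.eventually_ne_cobounded (0 : ℝ)] with x hx
  exact (pinchuk_of_mul_eq_one (mul_inv_cancel₀ hx)).symm

/-- the Pinchuk map is not proper: there exists a sequence `ξ` in `ℝ²`
with `‖ξ k‖ → ∞` such that `𝒫(ξ k)` converges to a point of `ℝ²`
(the asymptotic variety `S_𝒫` is non-empty). -/
theorem pinchuk_not_proper :
    ∃ ξ : ℕ → ℝ × ℝ, Tendsto (fun k => ‖ξ k‖) atTop atTop ∧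
      ∃ α : ℝ × ℝ, Tendsto (fun k => Pinchuk (ξ k)) atTop (𝓝 α) := by
  have hcast : Tendsto (Nat.cast : ℕ → ℝ) atTop (Bornology.cobounded ℝ) :=
    tendsto_natCast_atTop_cobounded
  have hnorm : Tendsto (fun k : ℕ => ‖(k : ℝ)‖) atTop atTop :=
    tendsto_norm_cobounded_atTop.comp hcast
  exact ⟨fun k => (k, (k : ℝ)⁻¹), tendsto_atTop_mono (fun k => norm_fst_le _) hnorm,
    (0, 0), tendsto_pinchuk_inv_cobounded.comp hcast⟩
end
end

section
/- The two points (0, 0) and (−1, −163/4) of the asymptotic variety of the Pinchuk map have no inverse images: there is no (x, y) ∈ ℝ² with 𝒫(x, y) = (0, 0), and no (x, y) ∈ ℝ² with 𝒫(x, y) = (−1, −163/4). -/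
open Filter Topology

noncomputable section

/-!
The points `(0, 0)` and `(-1, -163/4)` lie on the line `Q = (163/4) P`. The relation
`t f = h (f - h - h²)` shows that `f = 0` forces `h ∈ {0, -1}`; the curve `f = 0` is therefore
mapped to the lines `P = 0` and `P = -1`, strictly below the two points, since there
`Q = (163/4) P - t²` with `t ≠ 0`. Where `f ≠ 0`, the relation determines `t` from `f` and `h`. On
`P = 0` and `P = -1` it makes `t` a polynomial in `h`, and the difference between `Q` and its
value at the missing point becomes `f²` times an everywhere positive quadratic in `h`.
-/

theorem tP_mul_fP (x y : ℝ) :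
    tP x y * fP x y = hP x y * (fP x y - hP x y - hP x y ^ 2) := by
  unfold fP hP tP
  ring

section

variable {x y : ℝ}

theorem tP_ne_zero_of_fP_eq_zero (hf : fP x y = 0) : tP x y ≠ 0 := by
  intro ht
  have hy : y = 0 := by simpa [fP, ht] using hf
  simp [tP, hy] at ht

theorem hP_eq_zero_or_eq_neg_one_of_fP_eq_zero (hf : fP x y = 0) :
    hP x y = 0 ∨ hP x y = -1 := by
  have hmul : hP x y ^ 2 * (hP x y + 1) = 0 := by
    linear_combination tP_mul_fP x y + (hP x y - tP x y) * hf
  exact (mul_eq_zero.mp hmul).imp eq_zero_of_pow_eq_zero eq_neg_of_add_eq_zero_left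

theorem QP_eq_of_fP_eq_zero (hf : fP x y = 0) :
    QP x y = 163 / 4 * PP x y - tP x y ^ 2 := by
  unfold QP PP
  rcases hP_eq_zero_or_eq_neg_one_of_fP_eq_zero hf with hh | hh <;> rw [hf, hh] <;> ring

theorem QP_lt_of_fP_eq_zero (hf : fP x y = 0) : QP x y < 163 / 4 * PP x y := by
  rw [QP_eq_of_fP_eq_zero hf]
  exact sub_lt_self _ (sq_pos_of_ne_zero (tP_ne_zero_of_fP_eq_zero hf))

theorem tP_eq_of_fP_ne_zero (hf : fP x y ≠ 0) :
    tP x y = hP x y - hP x y ^ 2 * (hP x y + 1) / fP x y := by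
  field_simp
  linear_combination tP_mul_fP x y

theorem QP_eq_of_PP_eq_zero (hPP : PP x y = 0) (hf : fP x y ≠ 0) :
    QP x y = fP x y ^ 2 * (197 / 4 * hP x y ^ 2 + 104 * hP x y + 63) := by
  have hfh : fP x y = -hP x y := eq_neg_of_add_eq_zero_left hPP
  have hh : hP x y ≠ 0 := neg_ne_zero.mp (hfh ▸ hf)
  have ht : tP x y = hP x y * (hP x y + 2) := by
    rw [tP_eq_of_fP_ne_zero hf, hfh]
    field_simp
    ring
  rw [QP, ht, hfh]
  ring

theorem QP_pos_of_PP_eq_zero (hPP : PP x y = 0) (hf : fP x y ≠ 0) : 0 < QP x y := by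
  have hquad : 197 / 4 * hP x y ^ 2 + 104 * hP x y + 63 =
      197 / 4 * (hP x y + 208 / 197) ^ 2 + 1595 / 197 := by ring
  rw [QP_eq_of_PP_eq_zero hPP hf, hquad]
  positivity

theorem QP_eq_of_PP_eq_neg_one (hPP : PP x y = -1) (hf : fP x y ≠ 0) :
    QP x y = -163 / 4 + fP x y ^ 2 * ((197 * hP x y ^ 2 + 354 * hP x y + 163) / 4) := by
  have hfh : fP x y = -(hP x y + 1) := by
    unfold PP at hPP
    linear_combination hPP
  have hh : hP x y + 1 ≠ 0 := neg_ne_zero.mp (hfh ▸ hf)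
  have ht : tP x y = hP x y * (hP x y + 1) := by
    rw [tP_eq_of_fP_ne_zero hf, hfh]
    field_simp
    ring
  rw [QP, ht, hfh]
  ring

theorem lt_QP_of_PP_eq_neg_one (hPP : PP x y = -1) (hf : fP x y ≠ 0) :
    -163 / 4 < QP x y := by
  have hquad : 197 * hP x y ^ 2 + 354 * hP x y + 163 =
      197 * (hP x y + 177 / 197) ^ 2 + 782 / 197 := by ring
  rw [QP_eq_of_PP_eq_neg_one hPP hf, hquad]
  exact lt_add_of_pos_right _ (by positivity)

end

/-- the points `(0, 0)` and `(−1, −163/4)` of the asymptotic variety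
of the Pinchuk map have no inverse images. -/
theorem pinchuk_points_without_preimage :
    (¬ ∃ z : ℝ × ℝ, Pinchuk z = (0, 0)) ∧
      (¬ ∃ z : ℝ × ℝ, Pinchuk z = (-1, -163 / 4)) := by
  constructor <;> rintro ⟨⟨x, y⟩, hz⟩ <;> obtain ⟨hPP, hQP⟩ := Prod.mk.inj hz
  · rcases eq_or_ne (fP x y) 0 with hf | hf
    · linarith [QP_lt_of_fP_eq_zero hf]
    · linarith [QP_pos_of_PP_eq_zero hPP hf]
  · rcases eq_or_ne (fP x y) 0 with hf | hf
    · linarith [QP_lt_of_fP_eq_zero hf]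
    · linarith [lt_QP_of_PP_eq_neg_one hPP hf]
end
end

section
/- Every point of the curve {(p(s), q(s)) : s ∈ ℝ} other than (0, 0) and (−1, −163/4) has exactly one inverse image under the Pinchuk map: if α = (p(s), q(s)) for some s ∈ ℝ and α ∉ {(0, 0), (−1, −163/4)}, then there exists a unique (x, y) ∈ ℝ² with 𝒫(x, y) = α. -/
open Filter Topology

noncomputable section

/-- `p(s) = s² − 1`. -/
def pParam (s : ℝ) : ℝ := s ^ 2 - 1

/-- `q(s) = −75s⁵ + (345/4)s⁴ − 29s³ + (117/2)s² − 163/4`. -/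
def qParam (s : ℝ) : ℝ :=
  -75 * s ^ 5 + (345 / 4) * s ^ 4 - 29 * s ^ 3 + (117 / 2) * s ^ 2 - 163 / 4

/-! Off the exceptional set `h = P`, the pair `(P, h)` is a rational coordinate system on the
plane, in which `t = h (c + 1 - (h + 1)²) / (c - h)` where `c = P`. So the preimages of `(c, q)`
correspond to the solutions `h` of `Q(c, h) = q` away from the pole `h = c` and from the locus
`(h + 1)² = c + 1`. On the level line `P = c` the derivative of `Q` is a positive sum of squares
divided by `h - c`, so `Q` is strictly monotone on each side of the pole. It tends to `+∞` at both
ends and, if `c` is neither `0` nor `-1`, to `-∞` at the pole, hence takes every value exactly once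
on each side. (For `c = 0` it tends to `0` at the pole, which suffices as `q(-1) = 208 > 0`.) For
`(c, q) = (p(s), q(s))` one of the two solutions is `h = s - 1`, which lies in the locus
`(h + 1)² = c + 1` and yields no preimage; the solution on the other side yields exactly one. -/

lemma existsUnique_ne_apply_eq {α β : Type*} {g : α → β} {S T : Set α} (hST : Disjoint S T)
    (hS : S.InjOn g) (hT : T.InjOn g) {a : α} (ha : a ∈ S) (hga : g a ∈ g '' T) :
    ∃! b, b ∈ S ∪ T ∧ b ≠ a ∧ g b = g a := by
  obtain ⟨b, hb, hgb⟩ := hga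
  refine ⟨b, ⟨.inr hb, (hST.ne_of_mem ha hb).symm, hgb⟩, ?_⟩
  rintro b' ⟨hb' | hb', hne, hgb'⟩
  · exact absurd (hS hb' ha hgb') hne
  · exact hT hb' hb (hgb'.trans hgb.symm)

/-- The value of `t` at the point of the level line `P = c` with coordinate `h`. It is only
meaningful for `h ≠ c`. -/
def levelT (c h : ℝ) : ℝ := h * (c + 1 - (h + 1) ^ 2) / (c - h)

/-- The value of `Q` at the point of the level line `P = c` with coordinate `h`: the formula for
`Q` with `f` replaced by `c - h` and `t` by `levelT c h`. It is only meaningful for `h ≠ c`. -/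
def levelQ (c h : ℝ) : ℝ :=
  -(levelT c h) ^ 2 - 6 * levelT c h * h * (h + 1) - 170 * (c - h) * h
    - 91 * h ^ 2 - 195 * (c - h) * h ^ 2 - 69 * h ^ 3
    - 75 * (c - h) * h ^ 3 - (75 / 4) * h ^ 4

/-- The point of the plane with coordinates `P = c` and `h`. It is only meaningful for `h ≠ c` and
`(h + 1) ^ 2 ≠ c + 1`. -/
def levelPoint (c h : ℝ) : ℝ × ℝ :=
  ((h + 1) * (c - h) / (c + 1 - (h + 1) ^ 2) ^ 2,
    (c + 1 - (h + 1) ^ 2) ^ 2 * (c - h - h ^ 2) / (c - h) ^ 2)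

section Coordinates

lemma PP_sub_hP (x y : ℝ) : PP x y - hP x y = fP x y := by
  simp only [PP, add_sub_cancel_right]

lemma hP_add_one (x y : ℝ) : hP x y + 1 = x * (tP x y ^ 2 + y) := by
  simp only [hP, tP]; ring

lemma PP_add_one_sub_sq (x y : ℝ) :
    PP x y + 1 - (hP x y + 1) ^ 2 = (x * tP x y + 1) * (tP x y ^ 2 + y) := by
  simp only [PP, fP, hP, tP]; ring

lemma fP_sub_hP_sq (x y : ℝ) : fP x y - hP x y ^ 2 = (x * tP x y + 1) ^ 2 * y := by
  simp only [fP, hP]; ring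

variable {x y c h : ℝ}

lemma factors_fP_ne_zero (hxy : hP x y ≠ PP x y) :
    x * tP x y + 1 ≠ 0 ∧ tP x y ^ 2 + y ≠ 0 := by
  have hf : fP x y ≠ 0 := by rw [← PP_sub_hP]; exact sub_ne_zero.mpr hxy.symm
  exact ⟨fun hA => hf (by simp [fP, hA]), fun hB => hf (by simp [fP, hB])⟩

lemma hP_add_one_sq_ne (hxy : hP x y ≠ PP x y) : (hP x y + 1) ^ 2 ≠ PP x y + 1 := by
  have hAB := mul_ne_zero (factors_fP_ne_zero hxy).1 (factors_fP_ne_zero hxy).2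
  rw [← PP_add_one_sub_sq] at hAB
  exact (sub_ne_zero.mp hAB).symm

lemma levelT_PP_hP (hxy : hP x y ≠ PP x y) : levelT (PP x y) (hP x y) = tP x y := by
  rw [levelT, div_eq_iff (sub_ne_zero.mpr hxy.symm), PP_add_one_sub_sq, PP_sub_hP, fP, hP]
  ring

lemma levelQ_PP_hP (hxy : hP x y ≠ PP x y) : levelQ (PP x y) (hP x y) = QP x y := by
  rw [levelQ, levelT_PP_hP hxy, PP_sub_hP, QP]

lemma levelPoint_PP_hP (hxy : hP x y ≠ PP x y) : levelPoint (PP x y) (hP x y) = (x, y) := by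
  obtain ⟨hA, hB⟩ := factors_fP_ne_zero hxy
  rw [levelPoint, PP_add_one_sub_sq, PP_sub_hP, fP_sub_hP_sq, hP_add_one, fP]
  ext
  · field_simp
  · field_simp

lemma tP_levelPoint (hc : h ≠ c) (hd : (h + 1) ^ 2 ≠ c + 1) :
    tP (levelPoint c h).1 (levelPoint c h).2 = levelT c h := by
  have hc' := sub_ne_zero.mpr hc.symm
  have hd' := sub_ne_zero.mpr hd.symm
  simp only [tP, levelPoint, levelT]
  field_simp
  ring

lemma fst_levelPoint_mul_levelT_add_one (hc : h ≠ c) (hd : (h + 1) ^ 2 ≠ c + 1) :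
    (levelPoint c h).1 * levelT c h + 1 = (c - h) / (c + 1 - (h + 1) ^ 2) := by
  have hc' := sub_ne_zero.mpr hc.symm
  have hd' := sub_ne_zero.mpr hd.symm
  simp only [levelPoint, levelT]
  field_simp
  ring

lemma hP_levelPoint (hc : h ≠ c) (hd : (h + 1) ^ 2 ≠ c + 1) :
    hP (levelPoint c h).1 (levelPoint c h).2 = h := by
  have hc' := sub_ne_zero.mpr hc.symm
  have hd' := sub_ne_zero.mpr hd.symm
  rw [hP, tP_levelPoint hc hd, fst_levelPoint_mul_levelT_add_one hc hd, levelT]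
  field_simp

lemma fP_levelPoint (hc : h ≠ c) (hd : (h + 1) ^ 2 ≠ c + 1) :
    fP (levelPoint c h).1 (levelPoint c h).2 = c - h := by
  have hc' := sub_ne_zero.mpr hc.symm
  have hd' := sub_ne_zero.mpr hd.symm
  rw [fP, tP_levelPoint hc hd, fst_levelPoint_mul_levelT_add_one hc hd, levelT, levelPoint]
  field_simp
  ring

lemma Pinchuk_levelPoint (hc : h ≠ c) (hd : (h + 1) ^ 2 ≠ c + 1) :
    Pinchuk (levelPoint c h) = (c, levelQ c h) := by
  have hP' : PP (levelPoint c h).1 (levelPoint c h).2 = c := by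
    rw [PP, fP_levelPoint hc hd, hP_levelPoint hc hd, sub_add_cancel]
  rw [Pinchuk, hP', QP, tP_levelPoint hc hd, hP_levelPoint hc hd, fP_levelPoint hc hd, levelQ]

lemma existsUnique_Pinchuk_eq {q : ℝ} (hoff : ∀ x y, Pinchuk (x, y) = (c, q) → hP x y ≠ PP x y)
    (hlevel : ∃! h, h ≠ c ∧ (h + 1) ^ 2 ≠ c + 1 ∧ levelQ c h = q) :
    ∃! z, Pinchuk z = (c, q) := by
  obtain ⟨h, ⟨hc, hd, rfl⟩, huniq⟩ := hlevel
  refine ⟨levelPoint c h, Pinchuk_levelPoint hc hd, ?_⟩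
  rintro ⟨x, y⟩ hxy
  have hne := hoff x y hxy
  obtain ⟨rfl, hQ⟩ := Prod.mk.inj hxy
  have hh : hP x y = h := huniq _ ⟨hne, hP_add_one_sq_ne hne, (levelQ_PP_hP hne).trans hQ⟩
  rw [← hh, levelPoint_PP_hP hne]

lemma PP_QP_of_hP_eq_PP (hxy : hP x y = PP x y) :
    PP x y = 0 ∧ QP x y ≤ 0 ∨ PP x y = -1 := by
  have hf : fP x y = 0 := by rw [← PP_sub_hP, hxy, sub_self]
  rcases mul_eq_zero.mp hf with hA | hB
  · have hh : hP x y = 0 := by rw [hP, pow_eq_zero_iff two_ne_zero |>.mp hA, mul_zero]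
    refine .inl ⟨hxy ▸ hh, ?_⟩
    rw [QP, hf, hh]
    linarith [sq_nonneg (tP x y)]
  · have hh : hP x y = -1 := by linarith [hP_add_one x y, congrArg (x * ·) hB]
    exact .inr (hxy ▸ hh)

end Coordinates

section LevelLine

variable {c h : ℝ}

lemma hasDerivAt_levelT (hc : h ≠ c) :
    HasDerivAt (levelT c) ((c - 4 * h - 3 * h ^ 2 + levelT c h) / (c - h)) h := by
  have hc' := sub_ne_zero.mpr hc.symm
  have hid := hasDerivAt_id' h
  refine ((hid.fun_mul (((hid.add_const 1).fun_pow 2).const_sub (c + 1))).fun_div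
    (hid.const_sub c) hc').congr_deriv ?_
  simp only [levelT]
  field_simp
  ring

-- The numerator is the Jacobian determinant of the Pinchuk map.
lemma hasDerivAt_levelQ (hc : h ≠ c) :
    HasDerivAt (levelQ c)
      ((levelT c h ^ 2 + (levelT c h + (c - h) * (13 + 15 * h)) ^ 2 + (c - h) ^ 2) / (h - c))
      h := by
  have hc' := sub_ne_zero.mpr hc.symm
  have hc'' := sub_ne_zero.mpr hc
  have hid := hasDerivAt_id' h
  have ht := hasDerivAt_levelT hc
  have hf := hid.const_sub c
  refine ((((((((ht.fun_pow 2).fun_neg.fun_sub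
    (((ht.const_mul 6).fun_mul hid).fun_mul (hid.add_const 1))).fun_sub
    ((hf.const_mul 170).fun_mul hid)).fun_sub ((hid.fun_pow 2).const_mul 91)).fun_sub
    ((hf.const_mul 195).fun_mul (hid.fun_pow 2))).fun_sub ((hid.fun_pow 3).const_mul 69)).fun_sub
    ((hf.const_mul 75).fun_mul (hid.fun_pow 3))).fun_sub
    ((hid.fun_pow 4).const_mul (75 / 4))).congr_deriv ?_
  simp only [levelT]
  push_cast
  field_simp
  ring

lemma continuousOn_levelQ (c : ℝ) : ContinuousOn (levelQ c) {c}ᶜ :=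
  fun _ hc => (hasDerivAt_levelQ hc).continuousAt.continuousWithinAt

lemma deriv_levelQ_numerator_pos (hc : h ≠ c) :
    0 < levelT c h ^ 2 + (levelT c h + (c - h) * (13 + 15 * h)) ^ 2 + (c - h) ^ 2 := by
  have := sub_ne_zero.mpr hc.symm
  positivity

lemma strictMonoOn_levelQ (c : ℝ) : StrictMonoOn (levelQ c) (Set.Ioi c) := by
  refine strictMonoOn_of_deriv_pos (convex_Ioi c)
    ((continuousOn_levelQ c).mono fun _ hh => ne_of_gt hh) fun h hh => ?_
  rw [interior_Ioi] at hh
  rw [(hasDerivAt_levelQ (ne_of_gt hh)).deriv]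
  exact div_pos (deriv_levelQ_numerator_pos (ne_of_gt hh)) (sub_pos.mpr hh)

lemma strictAntiOn_levelQ (c : ℝ) : StrictAntiOn (levelQ c) (Set.Iio c) := by
  refine strictAntiOn_of_deriv_neg (convex_Iio c)
    ((continuousOn_levelQ c).mono fun _ hh => ne_of_lt hh) fun h hh => ?_
  rw [interior_Iio] at hh
  rw [(hasDerivAt_levelQ (ne_of_lt hh)).deriv]
  exact div_neg_of_pos_of_neg (deriv_levelQ_numerator_pos (ne_of_lt hh)) (sub_neg.mpr hh)

-- `levelQ c h / h ^ 4` is a rational function of `u = h⁻¹` with value `197 / 4` at `u = 0`.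
lemma tendsto_levelQ_cobounded (c : ℝ) :
    Tendsto (levelQ c) (Bornology.cobounded ℝ) atTop := by
  let τ : ℝ → ℝ := fun u => (c * u ^ 2 - 2 * u - 1) / (c * u - 1)
  let g : ℝ → ℝ := fun u =>
    -τ u ^ 2 - 6 * τ u * (1 + u) - 170 * (c * u - 1) * u ^ 2 - 91 * u ^ 2
      - 195 * (c * u - 1) * u - 69 * u - 75 * (c * u - 1) - 75 / 4
  have hτ : ContinuousAt τ 0 := by
    refine ContinuousAt.div (by fun_prop) (by fun_prop) (by norm_num)
  have hg : Tendsto g (𝓝 0) (𝓝 (197 / 4)) := by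
    have hcont : ContinuousAt g 0 := by fun_prop
    have hval : g 0 = 197 / 4 := by norm_num [g, τ]
    exact hval ▸ hcont
  have hpow : Tendsto (fun h : ℝ => h ^ 4) (Bornology.cobounded ℝ) atTop := by
    refine ((tendsto_pow_atTop four_ne_zero).comp tendsto_norm_cobounded_atTop).congr fun h => ?_
    exact (by decide : Even 4).pow_abs h
  refine (hpow.atTop_mul_pos (by norm_num) (hg.comp tendsto_inv₀_cobounded)).congr' ?_
  filter_upwards [Bornology.eventually_ne_cobounded 0, Bornology.eventually_ne_cobounded c]
    with h h0 hc
  have hc' := sub_ne_zero.mpr hc.symm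
  have hτh : τ h⁻¹ = levelT c h / h ^ 2 := by
    have : c * h⁻¹ - 1 = (c - h) / h := by field_simp
    simp only [τ, levelT, this]
    field_simp
    ring
  simp only [Function.comp_apply, g, hτh, levelQ]
  field_simp

lemma tendsto_levelQ_pole (h0 : c ≠ 0) (h1 : c ≠ -1) : Tendsto (levelQ c) (𝓝[≠] c) atBot := by
  -- `r h = (c - h) ^ 2 * levelQ c h` off the pole.
  let r : ℝ → ℝ := fun h =>
    -(h * (c + 1 - (h + 1) ^ 2)) ^ 2 - 6 * (h * (c + 1 - (h + 1) ^ 2)) * (c - h) * h * (h + 1)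
      + (c - h) ^ 2 * (-170 * (c - h) * h - 91 * h ^ 2 - 195 * (c - h) * h ^ 2 - 69 * h ^ 3
        - 75 * (c - h) * h ^ 3 - (75 / 4) * h ^ 4)
  have hr : Tendsto r (𝓝[≠] c) (𝓝 (r c)) :=
    (by fun_prop : Continuous r).continuousAt.continuousWithinAt
  have hrc : r c < 0 := by
    have : c + 1 ≠ 0 := fun h => h1 (eq_neg_of_add_eq_zero_left h)
    have : r c = -(c ^ 2 * (c + 1)) ^ 2 := by simp only [r]; ring
    rw [this]
    exact neg_neg_of_pos (by positivity)
  have hinv : Tendsto (fun h => ((c - h) ^ 2)⁻¹) (𝓝[≠] c) atTop := by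
    refine Tendsto.inv_tendsto_nhdsGT_zero (tendsto_nhdsWithin_iff.mpr ⟨?_, ?_⟩)
    · exact ((by fun_prop : Continuous fun h => (c - h) ^ 2).tendsto' c 0 (by simp)).mono_left
        nhdsWithin_le_nhds
    · filter_upwards [self_mem_nhdsWithin] with h hc
      exact sq_pos_of_ne_zero (sub_ne_zero.mpr (Ne.symm hc))
  refine (hr.neg_mul_atTop hrc hinv).congr' ?_
  filter_upwards [self_mem_nhdsWithin] with h hc
  have hc' := sub_ne_zero.mpr (Ne.symm hc)
  simp only [r, levelQ, levelT]
  field_simp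
  ring

lemma surjOn_levelQ_Ioi (h0 : c ≠ 0) (h1 : c ≠ -1) :
    Set.SurjOn (levelQ c) (Set.Ioi c) Set.univ :=
  isPreconnected_Ioi.intermediate_value_Iii (l₁ := 𝓝[>] c) inf_le_right
    (le_principal_iff.mpr (Ioi_mem_atTop c)) ((continuousOn_levelQ c).mono fun _ hh => ne_of_gt hh)
    ((tendsto_levelQ_pole h0 h1).mono_left (nhdsGT_le_nhdsNE c))
    ((tendsto_levelQ_cobounded c).mono_left IsOrderBornology.atTop_le_cobounded)

lemma surjOn_levelQ_Iio (h0 : c ≠ 0) (h1 : c ≠ -1) :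
    Set.SurjOn (levelQ c) (Set.Iio c) Set.univ :=
  isPreconnected_Iio.intermediate_value_Iii (l₁ := 𝓝[<] c) inf_le_right
    (le_principal_iff.mpr (Iio_mem_atBot c)) ((continuousOn_levelQ c).mono fun _ hh => ne_of_lt hh)
    ((tendsto_levelQ_pole h0 h1).mono_left (nhdsLT_le_nhdsNE c))
    ((tendsto_levelQ_cobounded c).mono_left IsOrderBornology.atBot_le_cobounded)

-- At the removable singularity `h = 0` the junk value `0 / 0 = 0` is the correct one.
lemma levelT_zero_left (h : ℝ) : levelT 0 h = h * (h + 2) := by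
  rcases eq_or_ne h 0 with rfl | hh
  · simp [levelT]
  · simp only [levelT]
    field_simp
    ring

lemma surjOn_levelQ_zero_Ioi : Set.SurjOn (levelQ 0) (Set.Ioi 0) (Set.Ioi 0) := by
  have hcont : Continuous (levelQ 0) := by
    unfold levelQ
    simp only [levelT_zero_left]
    fun_prop
  have hval : levelQ 0 0 = 0 := by simp [levelQ, levelT]
  have hsurj := intermediate_value_Ioi (a := 0) hcont.continuousOn
    ((tendsto_levelQ_cobounded 0).mono_left IsOrderBornology.atTop_le_cobounded)
  rwa [hval] at hsurj

end LevelLine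

section Curve

variable {s : ℝ}

lemma pParam_add_one (s : ℝ) : pParam s + 1 = s ^ 2 := by
  simp only [pParam, sub_add_cancel]

lemma pParam_neg (s : ℝ) : pParam (-s) = pParam s := by
  simp only [pParam, neg_sq]

lemma pParam_sub (s : ℝ) : pParam s - (s - 1) = s * (s - 1) := by
  simp only [pParam]; ring

lemma pParam_eq_zero_iff : pParam s = 0 ↔ s = 1 ∨ s = -1 := by
  rw [pParam, sub_eq_zero, sq_eq_one_iff]

lemma pParam_eq_neg_one_iff : pParam s = -1 ↔ s = 0 := by
  rw [pParam, sub_eq_neg_self, sq_eq_zero_iff]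

lemma qParam_neg_one : qParam (-1) = 208 := by norm_num [qParam]

lemma qParam_neg_ne (hs : s ≠ 0) : qParam (-s) ≠ qParam s := by
  have hdiff : qParam (-s) - qParam s = s ^ 3 * (150 * s ^ 2 + 58) := by
    simp only [qParam]; ring
  rw [← sub_ne_zero, hdiff]
  positivity

lemma levelQ_pParam_sub_one (s : ℝ) : levelQ (pParam s) (s - 1) = qParam s := by
  have ht : levelT (pParam s) (s - 1) = 0 := by
    rw [levelT, pParam_add_one, sub_add_cancel, sub_self, mul_zero, zero_div]
  rw [levelQ, ht, pParam, qParam]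
  ring

lemma hP_ne_PP_of_mem_curve (hs0 : s ≠ 0) (hs1 : s ≠ 1) {x y : ℝ}
    (hxy : Pinchuk (x, y) = (pParam s, qParam s)) : hP x y ≠ PP x y := by
  intro hex
  obtain ⟨hP', hQ'⟩ := Prod.mk.inj hxy
  rcases PP_QP_of_hP_eq_PP hex with ⟨hc, hq⟩ | hc
  · obtain rfl := (pParam_eq_zero_iff.mp (hP'.symm.trans hc)).resolve_left hs1
    have : (208 : ℝ) ≤ 0 := qParam_neg_one ▸ hQ' ▸ hq
    norm_num at this
  · exact hs0 (pParam_eq_neg_one_iff.mp (hP'.symm.trans hc))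

-- The other solution `h = -s - 1` of `(h + 1) ^ 2 = p(s) + 1` lies at level `q(-s) ≠ q(s)`.
lemma add_one_sq_ne_iff_of_levelQ_eq (hs0 : s ≠ 0) {h : ℝ} (hq : levelQ (pParam s) h = qParam s) :
    (h + 1) ^ 2 ≠ pParam s + 1 ↔ h ≠ s - 1 := by
  have hneg : h + 1 ≠ -s := by
    intro hh
    obtain rfl : h = -s - 1 := eq_sub_of_add_eq hh
    rw [← pParam_neg, levelQ_pParam_sub_one] at hq
    exact qParam_neg_ne hs0 hq
  rw [pParam_add_one, Ne, sq_eq_sq_iff_eq_or_eq_neg, or_iff_left hneg, ← eq_sub_iff_add_eq]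

lemma existsUnique_levelQ_eq (hs0 : s ≠ 0) (hs1 : s ≠ 1) :
    ∃! h, h ≠ pParam s ∧ h ≠ s - 1 ∧ levelQ (pParam s) h = qParam s := by
  have hinjR := (strictMonoOn_levelQ (pParam s)).injOn
  have hinjL := (strictAntiOn_levelQ (pParam s)).injOn
  have hdisj : Disjoint (Set.Iio (pParam s)) (Set.Ioi (pParam s)) :=
    (Set.Iic_disjoint_Ioi le_rfl).mono_left Set.Iio_subset_Iic_self
  have hm1 : pParam s ≠ -1 := fun h => hs0 (pParam_eq_neg_one_iff.mp h)
  rw [← levelQ_pParam_sub_one]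
  simp only [← Set.mem_compl_singleton_iff (b := pParam s), ← Set.Iio_union_Ioi]
  rcases (mul_ne_zero hs0 (sub_ne_zero.mpr hs1)).lt_or_gt with hlt | hgt
  · have hside : pParam s < s - 1 := by linarith [pParam_sub s]
    have h0 : pParam s ≠ 0 := by
      intro h
      rcases pParam_eq_zero_iff.mp h with rfl | rfl <;> norm_num at hlt
    rw [Set.union_comm]
    exact existsUnique_ne_apply_eq hdisj.symm hinjR hinjL hside
      (surjOn_levelQ_Iio h0 hm1 (Set.mem_univ _))
  · have hside : s - 1 < pParam s := by linarith [pParam_sub s]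
    refine existsUnique_ne_apply_eq hdisj hinjL hinjR hside ?_
    rw [levelQ_pParam_sub_one]
    by_cases h0 : pParam s = 0
    · obtain rfl := (pParam_eq_zero_iff.mp h0).resolve_left hs1
      rw [h0]
      exact surjOn_levelQ_zero_Ioi (by norm_num [qParam_neg_one])
    · exact surjOn_levelQ_Ioi h0 hm1 (Set.mem_univ _)

end Curve

/-- every point of the curve `{(p(s), q(s)) : s ∈ ℝ}` other than
`(0, 0)` and `(−1, −163/4)` has exactly one inverse image under the Pinchuk map. -/
theorem pinchuk_curve_unique_preimage (s : ℝ)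
    (h₀ : (pParam s, qParam s) ≠ ((0 : ℝ), (0 : ℝ)))
    (h₁ : (pParam s, qParam s) ≠ ((-1 : ℝ), (-163 / 4 : ℝ))) :
    ∃! z : ℝ × ℝ, Pinchuk z = (pParam s, qParam s) := by
  have hs0 : s ≠ 0 := by
    rintro rfl
    exact h₁ (by norm_num [pParam, qParam])
  have hs1 : s ≠ 1 := by
    rintro rfl
    exact h₀ (by norm_num [pParam, qParam])
  refine existsUnique_Pinchuk_eq (fun x y => hP_ne_PP_of_mem_curve hs0 hs1) ?_
  refine (existsUnique_congr fun h => ?_).mpr (existsUnique_levelQ_eq hs0 hs1)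
  rw [and_congr_right_iff, and_congr_left_iff]
  exact fun _ => add_one_sq_ne_iff_of_levelQ_eq hs0
end
end

section
/- Let F : ℝⁿ → ℝⁿ be a polynomial map whose Jacobian determinant det JF is not identically zero, let Sing F = {x ∈ ℝⁿ : det JF(x) = 0}, M_F = ℝⁿ ∖ Sing F, and K₀(F) = F(Sing F). Let ψ = (ψ₁, …, ψ_p) : M_F → ℝ^p be a continuous map such that ψ(ξ_k) → 0 for every sequence (ξ_k) in M_F with ‖ξ_k‖ → ∞, and ψ(ξ_k) → 0 for every sequence (ξ_k) in M_F converging to a point of Sing F. Then the closure in ℝ^{n+p} of the image (F, ψ)(M_F) equals (F, ψ)(M_F) ∪ ((K₀(F) ∪ S_F) × {0_{ℝ^p}}). -/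
open Filter Topology

/-!
Follow an ultrafilter of regular points along which `(F, ψ)` converges. Either it escapes to
infinity, or it converges to a critical point, or it converges to a regular point. In the first two
cases `ψ` tends to `0` and the limit lies over `S_F`, respectively `K₀(F)`; in the last case
continuity puts the limit in the image. Conversely, `det JF` is a nonzero analytic function, so the
regular points are dense, and every point of `K₀(F) ∪ S_F` is approached along regular points,
where `ψ` tends to `0`.
-/

section ClusterPoints

variable {α Y Z : Type*} [TopologicalSpace Y] [TopologicalSpace Z]

theorem mem_closure_image_iff_mapClusterPt {f : α → Y} {s : Set α} {y : Y} :
    y ∈ closure (f '' s) ↔ MapClusterPt y (𝓟 s) f := by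
  rw [mem_closure_iff_clusterPt, MapClusterPt, map_principal]

theorem mapClusterPt_prodMk_of_tendsto {l : Filter α} {F : α → Y} {ψ : α → Z} {y : Y} {z : Z}
    (hF : MapClusterPt y l F) (hψ : Tendsto ψ l (𝓝 z)) :
    MapClusterPt (y, z) l fun x => (F x, ψ x) := by
  obtain ⟨U, hUl, hUF⟩ := mapClusterPt_iff_ultrafilter.mp hF
  exact mapClusterPt_iff_ultrafilter.mpr ⟨U, hUl, hUF.prodMk_nhds (hψ.mono_left hUl)⟩

theorem tendsto_inf_principal_iff_seq {β : Type*} {l : Filter α} [l.IsCountablyGenerated]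
    {k : Filter β} {s : Set α} {f : α → β} :
    Tendsto f (l ⊓ 𝓟 s) k ↔
      ∀ ξ : ℕ → α, (∀ n, ξ n ∈ s) → Tendsto ξ atTop l → Tendsto (f ∘ ξ) atTop k := by
  rw [← map_comap_setCoe_val, tendsto_map'_iff, tendsto_iff_seq_tendsto]
  simp only [tendsto_comap_iff]
  exact ⟨fun h ξ hξs hξ => h (fun n => ⟨ξ n, hξs n⟩) hξ,
    fun h ξ hξ => h (fun n => ξ n) (fun n => (ξ n).2) hξ⟩

theorem mapClusterPt_iff_exists_seq [FirstCountableTopology Y] {l : Filter α}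
    [l.IsCountablyGenerated] {f : α → Y} {y : Y} :
    MapClusterPt y l f ↔ ∃ ξ : ℕ → α, Tendsto ξ atTop l ∧ Tendsto (f ∘ ξ) atTop (𝓝 y) := by
  refine ⟨fun h => ?_, fun ⟨ξ, hξ, hfξ⟩ => hfξ.mapClusterPt.of_comp hξ⟩
  have : (comap f (𝓝 y) ⊓ l).NeBot := neBot_inf_comap_iff_map'.mpr h
  obtain ⟨ξ, hξ⟩ := exists_seq_tendsto (comap f (𝓝 y) ⊓ l)
  rw [tendsto_inf, tendsto_comap_iff] at hξ
  exact ⟨ξ, hξ.symm⟩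

end ClusterPoints

section AsymptoticVariety

variable {X Y Z : Type*} [TopologicalSpace X] [TopologicalSpace Y] [TopologicalSpace Z]

/-- The asymptotic variety `S_F` of a map `F`: the limits of `F` at infinity, encoded as the cluster
points of `F` along the filter of complements of compact sets.
`asymptoticVariety_eq_setOf_seq` recovers the sequential description. -/
def asymptoticVariety (F : X → Y) : Set Y :=
  {y | MapClusterPt y (cocompact X) F}

theorem mapClusterPt_cocompact_inf_principal [R1Space X] {F : X → Y} {s : Set X} {y : Y}
    (hF : Continuous F) (hs : Dense s) (hy : y ∈ asymptoticVariety F) :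
    MapClusterPt y (cocompact X ⊓ 𝓟 s) F := by
  rw [(nhds_basis_opens y).mapClusterPt_iff_frequently]
  rintro V ⟨hyV, hV⟩
  rw [← coclosedCompact_eq_cocompact,
    (hasBasis_coclosedCompact.inf_principal s).frequently_iff]
  rintro K ⟨hKclosed, hKcompact⟩
  have hfar : (Kᶜ ∩ F ⁻¹' V).Nonempty := by
    obtain ⟨x, hxV, hxK⟩ :=
      ((hy.frequently (hV.mem_nhds hyV)).and_eventually hKcompact.compl_mem_cocompact).exists
    exact ⟨x, hxK, hxV⟩
  obtain ⟨x, ⟨hxK, hxV⟩, hxs⟩ :=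
    hs.inter_open_nonempty _ (hKclosed.isOpen_compl.inter (hV.preimage hF)) hfar
  exact ⟨x, ⟨hxK, hxs⟩, hxV⟩

theorem ultrafilter_le_cocompact_or_exists_le_nhds (U : Ultrafilter X) :
    (U : Filter X) ≤ cocompact X ∨ ∃ x, (U : Filter X) ≤ 𝓝 x := by
  refine or_iff_not_imp_left.mpr fun hU => ?_
  obtain ⟨K, hKU, hK⟩ := (disjoint_cocompact_right _).mp (U.disjoint_iff_not_le.mpr hU)
  obtain ⟨x, -, hx⟩ := hK.ultrafilter_le_nhds' U hKU
  exact ⟨x, hx⟩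

variable {F : X → Y} {S : Set X} {ψ : X → Z} {z : Z}

theorem closure_image_prodMk_subset [T2Space Y] [T2Space Z]
    (hF : Continuous F) (hψ : ContinuousOn ψ Sᶜ)
    (hψ_infty : Tendsto ψ (cocompact X ⊓ 𝓟 Sᶜ) (𝓝 z))
    (hψ_sing : ∀ x ∈ S, Tendsto ψ (𝓝[Sᶜ] x) (𝓝 z)) :
    closure ((fun x => (F x, ψ x)) '' Sᶜ) ⊆
      (fun x => (F x, ψ x)) '' Sᶜ ∪ (F '' S ∪ asymptoticVariety F) ×ˢ {z} := by
  rintro ⟨a, b⟩ hab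
  obtain ⟨U, hUS, hU⟩ :=
    mapClusterPt_iff_ultrafilter.mp (mem_closure_image_iff_mapClusterPt.mp hab)
  obtain ⟨hUa, hUb⟩ := (Prod.tendsto_iff _ _).mp hU
  rcases ultrafilter_le_cocompact_or_exists_le_nhds U with hU_infty | ⟨x, hUx⟩
  · have hb : b = z := tendsto_nhds_unique hUb (hψ_infty.mono_left (le_inf hU_infty hUS))
    exact .inr ⟨.inr (mapClusterPt_iff_ultrafilter.mpr ⟨U, hU_infty, hUa⟩), hb⟩
  · have ha : F x = a := tendsto_nhds_unique ((hF.tendsto x).mono_left hUx) hUa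
    by_cases hxS : x ∈ S
    · have hb : b = z := tendsto_nhds_unique hUb ((hψ_sing x hxS).mono_left (le_inf hUx hUS))
      exact .inr ⟨.inl ⟨x, hxS, ha⟩, hb⟩
    · have hb : ψ x = b := tendsto_nhds_unique ((hψ x hxS).mono_left (le_inf hUx hUS)) hUb
      exact .inl ⟨x, hxS, Prod.ext ha hb⟩

theorem image_prod_singleton_subset_closure (hF : Continuous F) (hS : Dense Sᶜ)
    (hψ_sing : ∀ x ∈ S, Tendsto ψ (𝓝[Sᶜ] x) (𝓝 z)) :
    (F '' S) ×ˢ {z} ⊆ closure ((fun x => (F x, ψ x)) '' Sᶜ) := by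
  rintro ⟨_, _⟩ ⟨⟨x, hxS, rfl⟩, rfl⟩
  have : (𝓝[Sᶜ] x).NeBot := mem_closure_iff_nhdsWithin_neBot.mp (hS x)
  exact mem_closure_of_tendsto
    ((hF.tendsto x |>.mono_left nhdsWithin_le_nhds).prodMk_nhds (hψ_sing x hxS))
    (eventually_mem_nhdsWithin.mono fun _ => Set.mem_image_of_mem _)

theorem asymptoticVariety_prod_singleton_subset_closure [R1Space X]
    (hF : Continuous F) (hS : Dense Sᶜ) (hψ_infty : Tendsto ψ (cocompact X ⊓ 𝓟 Sᶜ) (𝓝 z)) :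
    asymptoticVariety F ×ˢ {z} ⊆ closure ((fun x => (F x, ψ x)) '' Sᶜ) := by
  rintro ⟨a, _⟩ ⟨ha, rfl⟩
  exact mem_closure_image_iff_mapClusterPt.mpr <|
    (mapClusterPt_prodMk_of_tendsto (mapClusterPt_cocompact_inf_principal hF hS ha)
      hψ_infty).mono inf_le_right

theorem closure_image_prodMk_eq [R1Space X] [T2Space Y] [T2Space Z]
    (hF : Continuous F) (hS : Dense Sᶜ) (hψ : ContinuousOn ψ Sᶜ)
    (hψ_infty : Tendsto ψ (cocompact X ⊓ 𝓟 Sᶜ) (𝓝 z))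
    (hψ_sing : ∀ x ∈ S, Tendsto ψ (𝓝[Sᶜ] x) (𝓝 z)) :
    closure ((fun x => (F x, ψ x)) '' Sᶜ) =
      (fun x => (F x, ψ x)) '' Sᶜ ∪ (F '' S ∪ asymptoticVariety F) ×ˢ {z} := by
  refine (closure_image_prodMk_subset hF hψ hψ_infty hψ_sing).antisymm ?_
  rw [Set.union_prod]
  exact Set.union_subset subset_closure <| Set.union_subset
    (image_prod_singleton_subset_closure hF hS hψ_sing)
    (asymptoticVariety_prod_singleton_subset_closure hF hS hψ_infty)

end AsymptoticVariety

section Jacobian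

theorem dense_setOf_ne_zero_of_analyticOnNhd {𝕜 E G : Type*} [NontriviallyNormedField 𝕜]
    [NormedAddCommGroup E] [NormedSpace 𝕜 E] [PreconnectedSpace E]
    [NormedAddCommGroup G] [NormedSpace 𝕜 G] {f : E → G}
    (hf : AnalyticOnNhd 𝕜 f Set.univ) (hne : ∃ x, f x ≠ 0) : Dense {x | f x ≠ 0} := by
  obtain ⟨x₀, hx₀⟩ := hne
  refine interior_eq_empty_iff_dense_compl.mp (Set.eq_empty_of_forall_notMem fun x hx => hx₀ ?_)
  exact hf.eqOn_zero_of_preconnected_of_eventuallyEq_zero isPreconnected_univ (Set.mem_univ x)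
    (mem_interior_iff_mem_nhds.mp hx) (Set.mem_univ x₀)

variable {𝕜 ι : Type*} [RCLike 𝕜] [Fintype ι]

theorem analyticOnNhd_of_forall_eq_eval {κ : Type*} [Fintype κ]
    {F : EuclideanSpace 𝕜 ι → EuclideanSpace 𝕜 κ} {P : κ → MvPolynomial ι 𝕜}
    (hF : ∀ x i, F x i = MvPolynomial.eval x (P i)) : AnalyticOnNhd 𝕜 F Set.univ := by
  have hF_eq : F = (EuclideanSpace.equiv κ 𝕜).symm ∘
      fun (x : EuclideanSpace 𝕜 ι) i => MvPolynomial.eval x (P i) :=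
    funext fun x => PiLp.ext (hF x)
  rw [hF_eq]
  exact ((EuclideanSpace.equiv κ 𝕜).symm.toContinuousLinearMap.analyticOnNhd Set.univ).comp
    (AnalyticOnNhd.pi fun i => AnalyticOnNhd.eval_continuousLinearMap
      (EuclideanSpace.equiv ι 𝕜).toContinuousLinearMap (P i)) (Set.mapsTo_univ _ _)

variable [DecidableEq ι] {F : EuclideanSpace 𝕜 ι → EuclideanSpace 𝕜 ι}

/-- The Jacobian determinant `det JF` of a self-map of `𝕜^ι`, with the entries of `JF` given by the
partial derivatives in the directions of the standard basis. -/
noncomputable def jacobianDet (F : EuclideanSpace 𝕜 ι → EuclideanSpace 𝕜 ι)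
    (x : EuclideanSpace 𝕜 ι) : 𝕜 :=
  Matrix.det (Matrix.of fun i j : ι =>
    fderiv 𝕜 (fun y => F y i) x (EuclideanSpace.single j 1))

theorem analyticOnNhd_jacobianDet (hF : AnalyticOnNhd 𝕜 F Set.univ) :
    AnalyticOnNhd 𝕜 (jacobianDet F) Set.univ := by
  have hcoord (i : ι) : AnalyticOnNhd 𝕜 (fun y => F y i) Set.univ :=
    ((EuclideanSpace.proj i : EuclideanSpace 𝕜 ι →L[𝕜] 𝕜).analyticOnNhd Set.univ).comp hF
      (Set.mapsTo_univ _ _)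
  have hpartial (i j : ι) : AnalyticOnNhd 𝕜
      (fun x => fderiv 𝕜 (fun y => F y i) x (EuclideanSpace.single j 1)) Set.univ :=
    ((ContinuousLinearMap.apply 𝕜 𝕜 (EuclideanSpace.single j (1 : 𝕜))).analyticOnNhd
      Set.univ).comp (hcoord i).fderiv (Set.mapsTo_univ _ _)
  unfold jacobianDet
  simp only [Matrix.det_apply', Matrix.of_apply]
  exact Finset.analyticOnNhd_fun_sum _ fun σ _ =>
    analyticOnNhd_const.mul (Finset.analyticOnNhd_fun_prod _ fun j _ => hpartial (σ j) j)

theorem dense_compl_setOf_jacobianDet_eq_zero (hF : AnalyticOnNhd 𝕜 F Set.univ)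
    (hne : {x | jacobianDet F x = 0} ≠ Set.univ) : Dense {x | jacobianDet F x = 0}ᶜ :=
  dense_setOf_ne_zero_of_analyticOnNhd (analyticOnNhd_jacobianDet hF)
    ((Set.ne_univ_iff_exists_notMem _).mp hne)

end Jacobian

section Sequences

variable {E Y Z : Type*} [SeminormedAddGroup E] [ProperSpace E] [TopologicalSpace Y]
  [TopologicalSpace Z]

variable (E) in
theorem isCountablyGenerated_cocompact : (cocompact E).IsCountablyGenerated := by
  rw [← Metric.cobounded_eq_cocompact, ← comap_norm_atTop]
  infer_instance

theorem tendsto_cocompact_iff_norm_tendsto_atTop {ι : Type*} {l : Filter ι} {ξ : ι → E} :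
    Tendsto ξ l (cocompact E) ↔ Tendsto (fun k => ‖ξ k‖) l atTop := by
  rw [← Metric.cobounded_eq_cocompact, tendsto_norm_atTop_iff_cobounded]

theorem asymptoticVariety_eq_setOf_seq [FirstCountableTopology Y] (F : E → Y) :
    asymptoticVariety F = {α | ∃ ξ : ℕ → E,
      Tendsto (fun k => ‖ξ k‖) atTop atTop ∧ Tendsto (fun k => F (ξ k)) atTop (𝓝 α)} := by
  have := isCountablyGenerated_cocompact E
  ext α
  simp only [asymptoticVariety, Set.mem_ofPred_eq, mapClusterPt_iff_exists_seq,
    tendsto_cocompact_iff_norm_tendsto_atTop, Function.comp_def]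

theorem valette_variety_closure_general [T2Space Y] [FirstCountableTopology Y] [T2Space Z]
    {F : E → Y} {S : Set E} {ψ : E → Z} {z : Z}
    (hF : Continuous F) (hS : Dense Sᶜ) (hψ : ContinuousOn ψ Sᶜ)
    (hψ_infty : ∀ ξ : ℕ → E, (∀ k, ξ k ∈ Sᶜ) →
      Tendsto (fun k => ‖ξ k‖) atTop atTop → Tendsto (fun k => ψ (ξ k)) atTop (𝓝 z))
    (hψ_sing : ∀ ξ : ℕ → E, (∀ k, ξ k ∈ Sᶜ) →
      ∀ x ∈ S, Tendsto ξ atTop (𝓝 x) → Tendsto (fun k => ψ (ξ k)) atTop (𝓝 z)) :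
    closure ((fun x => (F x, ψ x)) '' Sᶜ) =
      (fun x => (F x, ψ x)) '' Sᶜ ∪ (F '' S ∪ {α | ∃ ξ : ℕ → E,
        Tendsto (fun k => ‖ξ k‖) atTop atTop ∧ Tendsto (fun k => F (ξ k)) atTop (𝓝 α)}) ×ˢ {z} := by
  have := isCountablyGenerated_cocompact E
  rw [← asymptoticVariety_eq_setOf_seq]
  refine closure_image_prodMk_eq hF hS hψ (tendsto_inf_principal_iff_seq.mpr fun ξ hξS hξ => ?_)
    fun x hx => tendsto_inf_principal_iff_seq.mpr fun ξ hξS hξ => hψ_sing ξ hξS x hx hξ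
  exact hψ_infty ξ hξS (tendsto_cocompact_iff_norm_tendsto_atTop.mp hξ)

end Sequences

/-- Lemma on Valette varieties: for a polynomial map `F : ℝⁿ → ℝⁿ`
whose Jacobian determinant is not identically zero, with `Sing F` its critical set,
`M_F = ℝⁿ ∖ Sing F`, `K₀(F) = F(Sing F)` and `S_F` the asymptotic variety, and for
any continuous `ψ : M_F → ℝ^p` tending to `0` along sequences of `M_F` going to
infinity or converging to a point of `Sing F`, the closure of `(F, ψ)(M_F)` in
`ℝ^{n+p}` equals `(F, ψ)(M_F) ∪ ((K₀(F) ∪ S_F) × {0})`. -/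
theorem valette_variety_closure (n p : ℕ)
    (F : EuclideanSpace ℝ (Fin n) → EuclideanSpace ℝ (Fin n))
    (hFpoly : ∃ Fc : Fin n → MvPolynomial (Fin n) ℝ,
      ∀ (x : EuclideanSpace ℝ (Fin n)) (i : Fin n), F x i = MvPolynomial.eval x (Fc i))
    (SingF : Set (EuclideanSpace ℝ (Fin n)))
    (hSingF : SingF = {x | Matrix.det
      (Matrix.of fun i j : Fin n =>
        fderiv ℝ (fun y => F y i) x (EuclideanSpace.single j 1)) = 0})
    (hJacNotIdZero : SingF ≠ Set.univ)
    (ψ : EuclideanSpace ℝ (Fin n) → EuclideanSpace ℝ (Fin p))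
    (hψcont : ContinuousOn ψ SingFᶜ)
    (hψinf : ∀ ξ : ℕ → EuclideanSpace ℝ (Fin n), (∀ k, ξ k ∈ SingFᶜ) →
      Tendsto (fun k => ‖ξ k‖) atTop atTop → Tendsto (fun k => ψ (ξ k)) atTop (𝓝 0))
    (hψsing : ∀ ξ : ℕ → EuclideanSpace ℝ (Fin n), (∀ k, ξ k ∈ SingFᶜ) →
      ∀ x ∈ SingF, Tendsto ξ atTop (𝓝 x) → Tendsto (fun k => ψ (ξ k)) atTop (𝓝 0))
    (SF : Set (EuclideanSpace ℝ (Fin n)))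
    (hSF : SF = {α | ∃ ξ : ℕ → EuclideanSpace ℝ (Fin n),
      Tendsto (fun k => ‖ξ k‖) atTop atTop ∧ Tendsto (fun k => F (ξ k)) atTop (𝓝 α)}) :
    closure ((fun x => (F x, ψ x)) '' SingFᶜ) =
      ((fun x => (F x, ψ x)) '' SingFᶜ) ∪
        ((F '' SingF ∪ SF) ×ˢ ({0} : Set (EuclideanSpace ℝ (Fin p)))) := by
  subst hSingF hSF
  obtain ⟨P, hP⟩ := hFpoly
  have hF := analyticOnNhd_of_forall_eq_eval hP
  exact valette_variety_closure_general (continuousOn_univ.mp hF.continuousOn)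
    (dense_compl_setOf_jacobianDet_eq_zero hF hJacNotIdZero) hψcont hψinf hψsing
end
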